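/- arXiv:1004.3146 — 2 statements merged into one kernel-verified Lean document; each statement's English description precedes it below -/
import Mathlib

section
/- Let k > 1/2. Let Θ be uniform on [0,2π) and R independent with density (2k-1)(1-r²)^{k-3/2}·r on (0,1) (suitably normalized to be a probability density). Then R·sin Θ has the symmetric beta-type density proportional to (1-t²)^{k-1} on (-1,1), i.e., R·sin Θ ~ ν_k where ν_k(dt) = (2^{1-2k}Γ(2k)/Γ(k)²)(1-t²)^{k-1}·1_{(-1,1)}(t)dt. -/
/-!
The point `(R cos Θ, R sin Θ)` has planar density proportional to `(1 - x² - y²) ^ (k - 3 / 2)` on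
the unit disc. Its second marginal is found by rescaling the chord `x² < 1 - y²` to `(-1, 1)`:
the density contributes the factor `(1 - y²) ^ (k - 3 / 2)` and the length of the chord the factor
`(1 - y²) ^ (1 / 2)`. The remaining integral is `∫ (1 - u²) ^ (k - 3 / 2) du = B(1 / 2, k - 1 / 2)`,
and the normalisations match because `B(1 / 2, a) * B(1 / 2, a + 1 / 2) = π / a`.
-/

open MeasureTheory Real

section BetaFunction

open ProbabilityTheory (beta)

/-- Legendre's duplication formula in terms of the beta function. -/
lemma two_rpow_mul_beta_self {a : ℝ} (ha : 0 < a) :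
    2 ^ (2 * a - 1) * beta a a = beta (1 / 2) a := by
  have hdup := Gamma_mul_Gamma_add_half a
  have hpow : (2 : ℝ) ^ (2 * a - 1) * 2 ^ (1 - 2 * a) = 1 := by
    rw [← rpow_add two_pos]
    norm_num
  have hΓ := Gamma_pos_of_pos (show 0 < a + 1 / 2 by positivity)
  have hΓ' := Gamma_pos_of_pos (show 0 < 2 * a by positivity)
  rw [beta, beta, Gamma_one_half_eq, ← two_mul, add_comm (1 / 2) a, ← mul_div_assoc,
    div_eq_div_iff hΓ'.ne' hΓ.ne']
  linear_combination 2 ^ (2 * a - 1) * Gamma a * hdup + Gamma a * Gamma (2 * a) * √π * hpow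

lemma beta_half_mul_beta_half_add_half {a : ℝ} (ha : 0 < a) :
    beta (1 / 2) a * beta (1 / 2) (a + 1 / 2) = π / a := by
  have hΓ := (Gamma_pos_of_pos ha).ne'
  have hΓ' := (Gamma_pos_of_pos (show 0 < a + 1 / 2 by positivity)).ne'
  rw [beta, beta, Gamma_one_half_eq, add_comm (1 / 2) a, show 1 / 2 + (a + 1 / 2) = a + 1 by ring,
    Gamma_add_one ha.ne']
  field_simp [hΓ, hΓ']
  exact sq_sqrt pi_pos.le

lemma two_rpow_mul_Gamma_div_Gamma_sq {k : ℝ} (hk : 0 < k) :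
    2 ^ (1 - 2 * k) * Gamma (2 * k) / Gamma k ^ 2 = (beta (1 / 2) k)⁻¹ := by
  rw [← two_rpow_mul_beta_self hk, beta, ← two_mul, ← neg_sub, rpow_neg two_pos.le, mul_inv,
    inv_div, mul_div_assoc, pow_two]

lemma inv_two_pi_mul_mul_beta {k : ℝ} (hk : 1 / 2 < k) :
    (2 * π)⁻¹ * (2 * k - 1) * beta (1 / 2) (k - 1 / 2) = (beta (1 / 2) k)⁻¹ := by
  have ha : 0 < k - 1 / 2 := sub_pos.2 hk
  have hprod := beta_half_mul_beta_half_add_half ha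
  rw [sub_add_cancel, eq_div_iff ha.ne'] at hprod
  refine eq_inv_of_mul_eq_one_left ?_
  linear_combination π⁻¹ * hprod + inv_mul_cancel₀ pi_ne_zero

end BetaFunction

section Pushforward

open scoped ENNReal

lemma ofReal_abs_mul_lintegral_comp_mul_left {a : ℝ} (ha : a ≠ 0) (f : ℝ → ℝ≥0∞) :
    ENNReal.ofReal |a| * ∫⁻ x, f (a * x) = ∫⁻ x, f x := by
  conv_rhs => rw [← Real.smul_map_volume_mul_left ha, lintegral_smul_measure, smul_eq_mul]
  congr 1
  exact (lintegral_map_equiv f (Homeomorph.mulLeft₀ a ha).toMeasurableEquiv).symm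

lemma map_restrict_Ioc_eq_of_periodic {E : Type*} [MeasurableSpace E] {f : ℝ → E} {T : ℝ}
    (hf : Measurable f) (hper : Function.Periodic f T) (hT : 0 < T) (s t : ℝ) :
    (volume.restrict (Set.Ioc s (s + T))).map f = (volume.restrict (Set.Ioc t (t + T))).map f := by
  refine Measure.ext_of_lintegral _ fun g hg => ?_
  rw [lintegral_map hg hf, lintegral_map hg hf]
  exact (isAddFundamentalDomain_Ioc hT s).setLIntegral_eq (isAddFundamentalDomain_Ioc hT t) _
    (hper.comp g).map_vadd_zmultiples

lemma map_sin_restrict_Ico_zero_two_pi :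
    (volume.restrict (Set.Ico 0 (2 * π))).map sin = (volume.restrict (Set.Ioo (-π) π)).map sin := by
  have hper := map_restrict_Ioc_eq_of_periodic measurable_sin sin_periodic two_pi_pos 0 (-π)
  rwa [zero_add, show -π + 2 * π = π by ring, ← restrict_Ico_eq_restrict_Ioc,
    ← restrict_Ioo_eq_restrict_Ioc] at hper

lemma snd_withDensity_prod {X Y : Type*} [MeasurableSpace X] [MeasurableSpace Y]
    (μ : Measure X) (ν : Measure Y) [SFinite μ] [SFinite ν] {g : X × Y → ℝ≥0∞}
    (hg : Measurable g) :
    ((μ.prod ν).withDensity g).snd = ν.withDensity fun y => ∫⁻ x, g (x, y) ∂μ := by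
  ext s hs
  rw [Measure.snd_apply hs, withDensity_apply _ (measurable_snd hs), withDensity_apply _ hs,
    ← Set.univ_prod, ← Measure.prod_restrict, Measure.restrict_univ,
    lintegral_prod_symm _ hg.aemeasurable]

lemma map_polarCoord_symm_withDensity {g : ℝ × ℝ → ℝ≥0∞} (hg : Measurable g) :
    ((volume.restrict polarCoord.target).withDensity fun p =>
      ENNReal.ofReal p.1 * g (polarCoord.symm p)).map polarCoord.symm = volume.withDensity g := by
  have hpolar : Measurable polarCoord.symm := continuous_polarCoord_symm.measurable
  refine Measure.ext_of_lintegral _ fun f hf => ?_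
  rw [lintegral_map hf hpolar,
    lintegral_withDensity_eq_lintegral_mul _ (by fun_prop)
      (g := fun p => f (polarCoord.symm p)) (by fun_prop),
    lintegral_withDensity_eq_lintegral_mul _ hg hf, ← lintegral_comp_polarCoord_symm]
  simp only [Pi.mul_apply, smul_eq_mul, mul_assoc]

/-- The measure `w (r²) r dr` on `(0, ∞)`: up to the total angle `2 * π`, the law of the norm of a
point of the plane with the rotation-invariant density `w (x² + y²)`. -/
noncomputable def radialMeasure (w : ℝ → ℝ≥0∞) : Measure ℝ :=
  (volume.restrict (Set.Ioi 0)).withDensity fun r => ENNReal.ofReal r * w (r ^ 2)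

instance (w : ℝ → ℝ≥0∞) : SFinite (radialMeasure w) :=
  inferInstanceAs (SFinite (Measure.withDensity _ _))

lemma map_polarCoord_symm_radialMeasure_prod {w : ℝ → ℝ≥0∞} (hw : Measurable w) :
    ((radialMeasure w).prod (volume.restrict (Set.Ioo (-π) π))).map polarCoord.symm =
      volume.withDensity fun p : ℝ × ℝ => w (p.1 ^ 2 + p.2 ^ 2) := by
  rw [radialMeasure, prod_withDensity_left (by fun_prop), Measure.prod_restrict,
    ← Measure.volume_eq_prod, ← polarCoord_target, ← map_polarCoord_symm_withDensity (by fun_prop)]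
  have hnorm (p : ℝ × ℝ) : (p.1 * cos p.2) ^ 2 + (p.1 * sin p.2) ^ 2 = p.1 ^ 2 := by
    linear_combination p.1 ^ 2 * sin_sq_add_cos_sq p.2
  simp only [polarCoord_symm_apply, hnorm]

lemma map_mul_sin_radialMeasure_prod {w : ℝ → ℝ≥0∞} (hw : Measurable w) :
    ((radialMeasure w).prod (volume.restrict (Set.Ico 0 (2 * π)))).map (fun p => p.1 * sin p.2) =
      volume.withDensity fun y => ∫⁻ x, w (x ^ 2 + y ^ 2) := by
  have map_mul_sin (ν : Measure ℝ) [SFinite ν] :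
      ((radialMeasure w).prod ν).map (fun p => p.1 * sin p.2) =
        ((radialMeasure w).prod (ν.map sin)).map (fun p => p.1 * p.2) := by
    conv_rhs => rw [← Measure.map_id (μ := radialMeasure w)]
    rw [Measure.map_prod_map _ _ measurable_id measurable_sin,
      Measure.map_map (by fun_prop) (by fun_prop)]
    rfl
  calc ((radialMeasure w).prod (volume.restrict (Set.Ico 0 (2 * π)))).map (fun p => p.1 * sin p.2)
      = ((radialMeasure w).prod (volume.restrict (Set.Ioo (-π) π))).map
          (fun p => p.1 * sin p.2) := by
        rw [map_mul_sin, map_sin_restrict_Ico_zero_two_pi, ← map_mul_sin]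
    _ = (((radialMeasure w).prod (volume.restrict (Set.Ioo (-π) π))).map polarCoord.symm).snd := by
        rw [Measure.snd, Measure.map_map measurable_snd continuous_polarCoord_symm.measurable]
        rfl
    _ = volume.withDensity fun y => ∫⁻ x, w (x ^ 2 + y ^ 2) := by
        rw [map_polarCoord_symm_radialMeasure_prod hw, Measure.volume_eq_prod,
          snd_withDensity_prod _ _ (by fun_prop)]

end Pushforward

section TruncatedPower

open scoped ENNReal
open ProbabilityTheory (beta beta_pos betaPDF betaPDF_eq betaPDF_of_pos_lt_one
  lintegral_betaPDF_eq_one)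

/-- The truncated power `(1 - s)₊ ^ α`, the profile (as a function of the squared norm) of the
densities `(1 - ‖x‖²) ^ α` on the unit ball. It vanishes for `s ≥ 1` whatever the sign of `α`. -/
noncomputable def truncPow (α : ℝ) : ℝ → ℝ≥0∞ :=
  (Set.Iio 1).indicator fun s => ENNReal.ofReal ((1 - s) ^ α)

lemma truncPow_of_lt_one (α : ℝ) {s : ℝ} (hs : s < 1) :
    truncPow α s = ENNReal.ofReal ((1 - s) ^ α) :=
  Set.indicator_of_mem (Set.mem_Iio.2 hs) _

lemma truncPow_of_one_le (α : ℝ) {s : ℝ} (hs : 1 ≤ s) : truncPow α s = 0 :=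
  Set.indicator_of_notMem (Set.notMem_Iio.2 hs) _

@[fun_prop]
lemma measurable_truncPow (α : ℝ) : Measurable (truncPow α) :=
  Measurable.indicator (by fun_prop) measurableSet_Iio

lemma truncPow_sq_eq_indicator (α : ℝ) :
    (fun t : ℝ => truncPow α (t ^ 2)) =
      (Set.Ioo (-1) 1).indicator fun t => ENNReal.ofReal ((1 - t ^ 2) ^ α) := by
  funext t
  simp only [truncPow, Set.indicator_apply, Set.mem_Iio, Set.mem_Ioo, sq_lt_one_iff_abs_lt_one,
    abs_lt]

lemma truncPow_one_sub_mul (α s : ℝ) {b : ℝ} (hb : 0 < b) :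
    truncPow α (1 - b * (1 - s)) = ENNReal.ofReal (b ^ α) * truncPow α s := by
  rcases lt_or_ge s 1 with hs | hs
  · rw [truncPow_of_lt_one _ hs, truncPow_of_lt_one _ (by nlinarith), sub_sub_cancel,
      mul_rpow hb.le (sub_nonneg.2 hs.le), ENNReal.ofReal_mul (by positivity)]
  · rw [truncPow_of_one_le _ hs, truncPow_of_one_le _ (by nlinarith), mul_zero]

lemma lintegral_truncPow_sq_add_sq (α y : ℝ) :
    ∫⁻ x, truncPow α (x ^ 2 + y ^ 2) =
      (∫⁻ u, truncPow α (u ^ 2)) * truncPow (α + 1 / 2) (y ^ 2) := by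
  rcases lt_or_ge (y ^ 2) 1 with hy | hy
  · have hb : 0 < 1 - y ^ 2 := sub_pos.2 hy
    have rescale (u : ℝ) : truncPow α ((√(1 - y ^ 2) * u) ^ 2 + y ^ 2) =
        ENNReal.ofReal ((1 - y ^ 2) ^ α) * truncPow α (u ^ 2) := by
      rw [← truncPow_one_sub_mul α (u ^ 2) hb, mul_pow, sq_sqrt hb.le]
      ring_nf
    rw [← ofReal_abs_mul_lintegral_comp_mul_left (sqrt_pos.2 hb).ne', abs_of_nonneg (sqrt_nonneg _)]
    simp only [rescale]
    rw [lintegral_const_mul _ (by fun_prop), ← mul_assoc, ← ENNReal.ofReal_mul (sqrt_nonneg _),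
      sqrt_eq_rpow, ← rpow_add hb, add_comm, ← truncPow_of_lt_one _ hy, mul_comm]
  · have hvanish (x : ℝ) : truncPow α (x ^ 2 + y ^ 2) = 0 :=
      truncPow_of_one_le _ (by nlinarith [sq_nonneg x])
    simp only [hvanish, lintegral_zero, truncPow_of_one_le _ hy, mul_zero]

lemma truncPow_two_mul_sub_one_sq {a : ℝ} (ha : 0 < a) (v : ℝ) :
    truncPow (a - 1) ((2 * v - 1) ^ 2) =
      ENNReal.ofReal (4 ^ (a - 1) * beta a a) * betaPDF a a v := by
  by_cases hv : 0 < v ∧ v < 1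
  · obtain ⟨hv₀, hv₁⟩ := hv
    have hv₁' : 0 < 1 - v := sub_pos.2 hv₁
    have hbeta := beta_pos ha ha
    rw [truncPow_of_lt_one _ (by nlinarith [mul_pos hv₀ hv₁']), betaPDF_of_pos_lt_one hv₀ hv₁,
      ← ENNReal.ofReal_mul (by positivity), show 1 - (2 * v - 1) ^ 2 = 4 * (v * (1 - v)) by ring,
      mul_rpow (by norm_num) (by positivity), mul_rpow hv₀.le hv₁'.le]
    congr 1
    field_simp
  · have hv' : 1 ≤ (2 * v - 1) ^ 2 := by
      by_contra! hlt
      exact hv ⟨by nlinarith, by nlinarith⟩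
    rw [truncPow_of_one_le _ hv', betaPDF_eq, if_neg hv, ENNReal.ofReal_zero, mul_zero]

lemma lintegral_truncPow_sq {a : ℝ} (ha : 0 < a) :
    ∫⁻ u, truncPow (a - 1) (u ^ 2) = ENNReal.ofReal (beta (1 / 2) a) := by
  have hpow : (2 : ℝ) * 4 ^ (a - 1) = 2 ^ (2 * a - 1) := by
    rw [show (4 : ℝ) = 2 ^ (2 : ℝ) by norm_num, ← rpow_mul two_pos.le, mul_comm,
      ← rpow_add_one two_ne_zero]
    ring_nf
  rw [← lintegral_sub_right_eq_self _ 1,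
    ← ofReal_abs_mul_lintegral_comp_mul_left two_ne_zero, abs_two]
  simp only [truncPow_two_mul_sub_one_sq ha]
  rw [lintegral_const_mul' _ _ ENNReal.ofReal_ne_top, lintegral_betaPDF_eq_one ha ha, mul_one,
    ← ENNReal.ofReal_mul two_pos.le, ← mul_assoc, hpow, two_rpow_mul_beta_self ha]

lemma withDensity_restrict_Ioo_neg_one_one_eq_smul {c : ℝ} (hc : 0 ≤ c) (α : ℝ) :
    (volume.restrict (Set.Ioo (-1 : ℝ) 1)).withDensity
        (fun t => ENNReal.ofReal (c * (1 - t ^ 2) ^ α)) =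
      ENNReal.ofReal c • volume.withDensity fun t => truncPow α (t ^ 2) := by
  rw [truncPow_sq_eq_indicator, withDensity_indicator measurableSet_Ioo,
    ← withDensity_smul' _ _ ENNReal.ofReal_ne_top]
  simp only [ENNReal.ofReal_mul hc]
  rfl

lemma withDensity_restrict_Ioo_zero_one_eq_smul_radialMeasure {c : ℝ} (hc : 0 ≤ c) (α : ℝ) :
    (volume.restrict (Set.Ioo (0 : ℝ) 1)).withDensity
        (fun r => ENNReal.ofReal (c * (1 - r ^ 2) ^ α * r)) =
      ENNReal.ofReal c • radialMeasure (truncPow α) := by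
  have hdensity : (ENNReal.ofReal c • fun r : ℝ => ENNReal.ofReal r * truncPow α (r ^ 2)) =
      (Set.Ioo (-1) 1).indicator fun r => ENNReal.ofReal (c * (1 - r ^ 2) ^ α * r) := by
    funext r
    rw [Pi.smul_apply, congrFun (truncPow_sq_eq_indicator α) r, smul_eq_mul]
    by_cases hr : r ∈ Set.Ioo (-1 : ℝ) 1
    · have hpow : 0 ≤ (1 - r ^ 2) ^ α := rpow_nonneg (by nlinarith [hr.1, hr.2]) α
      rw [Set.indicator_of_mem hr, Set.indicator_of_mem hr, ENNReal.ofReal_mul (by positivity),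
        ENNReal.ofReal_mul hc]
      ring
    · simp only [Set.indicator_of_notMem hr, mul_zero]
  have hinter : Set.Ioo (-1 : ℝ) 1 ∩ Set.Ioi 0 = Set.Ioo 0 1 := by
    rw [Set.inter_comm, Set.Ioi_inter_Ioo, max_eq_left (by norm_num)]
  rw [radialMeasure, ← withDensity_smul' _ _ ENNReal.ofReal_ne_top, hdensity,
    withDensity_indicator measurableSet_Ioo, Measure.restrict_restrict measurableSet_Ioo, hinter]

lemma map_mul_sin_radialMeasure_truncPow_prod {a : ℝ} (ha : 0 < a) :
    ((radialMeasure (truncPow (a - 1))).prod (volume.restrict (Set.Ico 0 (2 * π)))).map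
        (fun p => p.1 * sin p.2) =
      ENNReal.ofReal (beta (1 / 2) a) •
        volume.withDensity fun y => truncPow (a - 1 / 2) (y ^ 2) := by
  have hexp : a - 1 + 1 / 2 = a - 1 / 2 := by ring
  rw [map_mul_sin_radialMeasure_prod (measurable_truncPow _),
    ← withDensity_smul' _ _ ENNReal.ofReal_ne_top]
  simp only [lintegral_truncPow_sq_add_sq, lintegral_truncPow_sq ha, hexp]
  rfl

end TruncatedPower

theorem stmt_13 (k : ℝ) (hk : 1 / 2 < k)
    (μR : Measure ℝ)
    (hμR : μR = (volume.restrict (Set.Ioo (0 : ℝ) 1)).withDensity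
      (fun r => ENNReal.ofReal ((2 * k - 1) * (1 - r ^ 2) ^ (k - 3 / 2) * r)))
    (μΘ : Measure ℝ)
    (hμΘ : μΘ = (ENNReal.ofReal (2 * π))⁻¹ • volume.restrict (Set.Ico 0 (2 * π))) :
    Measure.map (fun p : ℝ × ℝ => p.1 * Real.sin p.2) (μR.prod μΘ) =
      (volume.restrict (Set.Ioo (-1 : ℝ) 1)).withDensity
        (fun t => ENNReal.ofReal
          (2 ^ (1 - 2 * k) * Real.Gamma (2 * k) / Real.Gamma k ^ 2 *
            (1 - t ^ 2) ^ (k - 1))) := by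
  have hk₀ : 0 < k := one_half_pos.trans hk
  have ha : 0 < k - 1 / 2 := sub_pos.2 hk
  have hc : 0 ≤ 2 * k - 1 := by linarith
  have hbeta := (ProbabilityTheory.beta_pos one_half_pos hk₀).le
  have hR : μR = ENNReal.ofReal (2 * k - 1) • radialMeasure (truncPow (k - 1 / 2 - 1)) := by
    rw [hμR, withDensity_restrict_Ioo_zero_one_eq_smul_radialMeasure hc,
      show k - 3 / 2 = k - 1 / 2 - 1 by ring]
  calc Measure.map (fun p : ℝ × ℝ => p.1 * Real.sin p.2) (μR.prod μΘ)
      = ENNReal.ofReal ((2 * π)⁻¹ * (2 * k - 1)) •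
          ((radialMeasure (truncPow (k - 1 / 2 - 1))).prod
            (volume.restrict (Set.Ico 0 (2 * π)))).map (fun p => p.1 * sin p.2) := by
        rw [hR, hμΘ, Measure.prod_smul_left, Measure.prod_smul_right, Measure.map_smul,
          Measure.map_smul, smul_smul, mul_comm, ← ENNReal.ofReal_inv_of_pos two_pi_pos,
          ← ENNReal.ofReal_mul (by positivity)]
    _ = ENNReal.ofReal ((ProbabilityTheory.beta (1 / 2) k)⁻¹) •
          volume.withDensity fun y => truncPow (k - 1) (y ^ 2) := by
        rw [map_mul_sin_radialMeasure_truncPow_prod ha, smul_smul,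
          ← ENNReal.ofReal_mul (by positivity), inv_two_pi_mul_mul_beta hk,
          show k - 1 / 2 - 1 / 2 = k - 1 by ring]
    _ = _ := by
        rw [two_rpow_mul_Gamma_div_Gamma_sq hk₀,
          withDensity_restrict_Ioo_neg_one_one_eq_smul (inv_nonneg.2 hbeta)]
end

section
/- Let (X,Y) be bivariate Gaussian, centered, with Var X = Var Y = 1 and E[XY] = r, and let Φ be the standard normal CDF. Then E[Φ(X)Φ(Y)] = 1/2 - (1/(2π))·arccos(r/2). -/
open MeasureTheory ProbabilityTheory Real

/-!
If `U`, `V` are independent standard normal variables, independent of `(X, Y)`, then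
`E[Φ(X)Φ(Y)] = P(U < X, V < Y)`, the probability that the centered Gaussian vector
`(X - U, Y - V)` lies in the open quadrant. A centered Gaussian pair with correlation `cos θ` is
a pair of positive multiples of `u` and `cos θ * u + sin θ * v` with `(u, v)` standard, so this
event says that the rotation-invariant vector `(u, v)` falls in a sector of opening angle `π - θ`,
which has probability `(π - θ) / (2π)`. The correlation of `X - U` and `Y - V` is `r / 2`.
-/

/-- The directions of a planar cone `S`, recorded by their angles in `(-π, π)`. The ray of angle
`π`, which polar coordinates miss, is discarded. -/
def coneAngles (S : Set (ℝ × ℝ)) : Set ℝ :=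
  {φ ∈ Set.Ioo (-π) π | (cos φ, sin φ) ∈ S}

lemma measurableSet_coneAngles {S : Set (ℝ × ℝ)} (hS : MeasurableSet S) :
    MeasurableSet (coneAngles S) :=
  measurableSet_Ioo.inter (measurableSet_preimage (by fun_prop) hS)

lemma polarCoord_symm_mem_iff_of_cone {S : Set (ℝ × ℝ)}
    (hcone : ∀ r : ℝ, 0 < r → ∀ p ∈ S, r • p ∈ S) {q : ℝ × ℝ} (hq : q ∈ polarCoord.target) :
    polarCoord.symm q ∈ S ↔ q.2 ∈ coneAngles S := by
  have hq₁ : 0 < q.1 := hq.1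
  have hpolar : polarCoord.symm q = q.1 • (cos q.2, sin q.2) := rfl
  have hscale : polarCoord.symm q ∈ S ↔ (cos q.2, sin q.2) ∈ S := by
    refine ⟨fun h ↦ ?_, fun h ↦ hpolar ▸ hcone _ hq₁ _ h⟩
    simpa [hpolar, hq₁.ne'] using hcone q.1⁻¹ (inv_pos.2 hq₁) _ h
  exact hscale.trans (and_iff_right hq.2).symm

lemma setIntegral_radial_of_cone {S : Set (ℝ × ℝ)} (hS : MeasurableSet S)
    (hcone : ∀ r : ℝ, 0 < r → ∀ p ∈ S, r • p ∈ S) (g : ℝ → ℝ) :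
    ∫ p in S, g (p.1 ^ 2 + p.2 ^ 2) =
      (∫ r in Set.Ioi 0, r * g (r ^ 2)) * volume.real (coneAngles S) := by
  have hpolar : ∀ q ∈ polarCoord.target,
      q.1 • S.indicator (fun p ↦ g (p.1 ^ 2 + p.2 ^ 2)) (polarCoord.symm q) =
        q.1 * g (q.1 ^ 2) * (coneAngles S).indicator 1 q.2 := by
    intro q hq
    have hnorm : (q.1 * cos q.2) ^ 2 + (q.1 * sin q.2) ^ 2 = q.1 ^ 2 := by
      linear_combination q.1 ^ 2 * sin_sq_add_cos_sq q.2
    by_cases h : q.2 ∈ coneAngles S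
    · rw [Set.indicator_of_mem h,
        Set.indicator_of_mem ((polarCoord_symm_mem_iff_of_cone hcone hq).2 h),
        polarCoord_symm_apply, hnorm]
      simp
    · rw [Set.indicator_of_notMem h,
        Set.indicator_of_notMem (mt (polarCoord_symm_mem_iff_of_cone hcone hq).1 h)]
      simp
  rw [← integral_indicator hS, ← integral_comp_polarCoord_symm,
    setIntegral_congr_fun polarCoord.open_target.measurableSet hpolar, polarCoord_target,
    Measure.volume_eq_prod,
    setIntegral_prod_mul (fun r ↦ r * g (r ^ 2)) ((coneAngles S).indicator 1),
    setIntegral_indicator (measurableSet_coneAngles hS),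
    Set.inter_eq_right.2 fun φ hφ ↦ hφ.1]
  simp

lemma gaussianReal_prod_gaussianReal_eq_withDensity :
    (gaussianReal 0 1).prod (gaussianReal 0 1) =
      volume.withDensity fun p : ℝ × ℝ ↦
        ENNReal.ofReal ((2 * π)⁻¹ * exp (-(p.1 ^ 2 + p.2 ^ 2) / 2)) := by
  rw [gaussianReal_of_var_ne_zero 0 one_ne_zero, prod_withDensity (by fun_prop) (by fun_prop),
    ← Measure.volume_eq_prod]
  congr 1 with p
  rw [gaussianPDF, gaussianPDF, ← ENNReal.ofReal_mul (gaussianPDFReal_nonneg _ _ _)]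
  congr 1
  have hsqrt : √(2 * π) * √(2 * π) = 2 * π := mul_self_sqrt (by positivity)
  simp only [gaussianPDFReal, NNReal.coe_one, mul_one, sub_zero]
  rw [mul_mul_mul_comm, ← mul_inv, hsqrt, ← exp_add]
  ring_nf

lemma measureReal_gaussianReal_prod_cone {S : Set (ℝ × ℝ)} (hS : MeasurableSet S)
    (hcone : ∀ r : ℝ, 0 < r → ∀ p ∈ S, r • p ∈ S) :
    ((gaussianReal 0 1).prod (gaussianReal 0 1)).real S = volume.real (coneAngles S) / (2 * π) := by
  set γ := (gaussianReal 0 1).prod (gaussianReal 0 1) with hγ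
  set C := ∫ r in Set.Ioi (0 : ℝ), r * ((2 * π)⁻¹ * exp (-r ^ 2 / 2))
  have hproportional {T : Set (ℝ × ℝ)} (hT : MeasurableSet T)
      (hTcone : ∀ r : ℝ, 0 < r → ∀ p ∈ T, r • p ∈ T) :
      γ.real T = C * volume.real (coneAngles T) := by
    rw [← setIntegral_radial_of_cone hT hTcone fun t ↦ (2 * π)⁻¹ * exp (-t / 2),
      measureReal_def, hγ, gaussianReal_prod_gaussianReal_eq_withDensity, withDensity_apply _ hT,
      integral_eq_lintegral_of_nonneg_ae (ae_of_all _ fun _ ↦ by positivity)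
        (by fun_prop)]
  -- The plane itself is a cone, which determines `C`.
  have hC : 1 = C * (2 * π) := by
    have hangles : volume.real (coneAngles Set.univ) = 2 * π := by
      have huniv : coneAngles Set.univ = Set.Ioo (-π) π := by
        ext
        simp [coneAngles]
      rw [huniv, volume_real_Ioo_of_le (by linarith [pi_pos])]
      ring
    rw [← hangles, ← hproportional .univ fun _ _ _ _ ↦ trivial, probReal_univ]
  rw [hproportional hS hcone, eq_div_iff (by positivity)]
  linear_combination -volume.real (coneAngles S) * hC

lemma cos_pos_iff_abs_lt_pi_div_two {x : ℝ} (hx : |x| ≤ π + π / 2) : 0 < cos x ↔ |x| < π / 2 := by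
  rw [← cos_abs]
  refine ⟨fun h ↦ ?_, fun h ↦ cos_pos_of_mem_Ioo ⟨by linarith [abs_nonneg x, pi_pos], h⟩⟩
  by_contra! hle
  exact h.not_ge (cos_nonpos_of_pi_div_two_le_of_le hle hx)

lemma coneAngles_inter_halfPlanes {θ : ℝ} (hθ : θ ∈ Set.Icc 0 π) :
    coneAngles {p | 0 < p.1 ∧ 0 < cos θ * p.1 + sin θ * p.2} = Set.Ioo (θ - π / 2) (π / 2) := by
  obtain ⟨hθ₀, hθπ⟩ := hθ
  ext φ
  have hangle : cos θ * cos φ + sin θ * sin φ = cos (φ - θ) := by rw [cos_sub]; ring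
  simp only [coneAngles, Set.mem_ofPred_eq, Set.mem_Ioo, hangle]
  constructor
  · rintro ⟨⟨hφ₁, hφ₂⟩, hcos, hcos'⟩
    rw [cos_pos_iff_abs_lt_pi_div_two (abs_le.2 ⟨by linarith, by linarith⟩), abs_lt] at hcos
    rw [cos_pos_iff_abs_lt_pi_div_two (abs_le.2 ⟨by linarith, by linarith⟩), abs_lt] at hcos'
    exact ⟨by linarith, hcos.2⟩
  · rintro ⟨hφ₁, hφ₂⟩
    exact ⟨⟨by linarith, by linarith⟩, cos_pos_of_mem_Ioo ⟨by linarith, hφ₂⟩,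
      cos_pos_of_mem_Ioo ⟨by linarith, by linarith⟩⟩

lemma measureReal_gaussianReal_prod_halfPlanes {θ : ℝ} (hθ : θ ∈ Set.Icc 0 π) :
    ((gaussianReal 0 1).prod (gaussianReal 0 1)).real
      {p | 0 < p.1 ∧ 0 < cos θ * p.1 + sin θ * p.2} = 1 / 2 - 1 / (2 * π) * θ := by
  have hcone : ∀ r : ℝ, 0 < r → ∀ p ∈ {p : ℝ × ℝ | 0 < p.1 ∧ 0 < cos θ * p.1 + sin θ * p.2},
      r • p ∈ {p : ℝ × ℝ | 0 < p.1 ∧ 0 < cos θ * p.1 + sin θ * p.2} := by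
    rintro r hr p ⟨hp₁, hp₂⟩
    refine ⟨mul_pos hr hp₁, ?_⟩
    convert! mul_pos hr hp₂ using 1
    simp only [Prod.smul_fst, Prod.smul_snd, smul_eq_mul]
    ring
  have hmeas : MeasurableSet {p : ℝ × ℝ | 0 < p.1 ∧ 0 < cos θ * p.1 + sin θ * p.2} := by
    measurability
  rw [measureReal_gaussianReal_prod_cone hmeas hcone, coneAngles_inter_halfPlanes hθ,
    volume_real_Ioo_of_le (by linarith [hθ.2])]
  field_simp
  ring

section GaussianPairs

variable {Ω Ω' : Type*} [MeasurableSpace Ω] [MeasurableSpace Ω'] {P : Measure Ω} {Q : Measure Ω'}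
  {X Y : Ω → ℝ} {U V : Ω' → ℝ}

lemma abs_covariance_le_sqrt_variance_mul_variance [IsFiniteMeasure P] (hX : MemLp X 2 P)
    (hY : MemLp Y 2 P) : |cov[X, Y; P]| ≤ √(Var[X; P] * Var[Y; P]) := by
  have hquadratic (t : ℝ) :
      0 ≤ Var[X; P] * (t * t) + 2 * cov[X, Y; P] * t + Var[Y; P] := by
    have hexpand : Var[fun ω ↦ t * X ω + Y ω; P] =
        Var[X; P] * (t * t) + 2 * cov[X, Y; P] * t + Var[Y; P] := by
      rw [variance_fun_add (hX.const_mul t) hY, variance_const_mul, covariance_const_mul_left]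
      ring
    exact hexpand ▸ variance_nonneg _ _
  have hdiscrim := discrim_le_zero hquadratic
  rw [discrim] at hdiscrim
  exact abs_le_sqrt (by linarith)

lemma covariance_linearCombination_of_indepFun [IsFiniteMeasure P] (hX : MemLp X 2 P)
    (hY : MemLp Y 2 P) (hindep : X ⟂ᵢ[P] Y) (a b c d : ℝ) :
    cov[fun ω ↦ a * X ω + b * Y ω, fun ω ↦ c * X ω + d * Y ω; P] =
      a * c * Var[X; P] + b * d * Var[Y; P] := by
  have hX' (t : ℝ) : MemLp (fun ω ↦ t * X ω) 2 P := hX.const_mul t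
  have hY' (t : ℝ) : MemLp (fun ω ↦ t * Y ω) 2 P := hY.const_mul t
  have hXY : cov[X, Y; P] = 0 := hindep.covariance_eq_zero hX hY
  change cov[(fun ω ↦ a * X ω) + fun ω ↦ b * Y ω, (fun ω ↦ c * X ω) + fun ω ↦ d * Y ω; P] = _
  rw [covariance_add_left (hX' a) (hY' b) ((hX' c).add (hY' d)),
    covariance_add_right (hX' a) (hX' c) (hY' d), covariance_add_right (hY' b) (hX' c) (hY' d)]
  simp only [covariance_const_mul_left, covariance_const_mul_right, covariance_comm Y X, hXY,
    covariance_self hX.aemeasurable, covariance_self hY.aemeasurable]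
  ring

lemma hasGaussianLaw_linearCombination (hXY : HasGaussianLaw (fun ω ↦ (X ω, Y ω)) P)
    (a b c d : ℝ) :
    HasGaussianLaw (fun ω ↦ (a * X ω + b * Y ω, c * X ω + d * Y ω)) P :=
  hXY.map_fun <|
    (a • ContinuousLinearMap.fst ℝ ℝ ℝ + b • ContinuousLinearMap.snd ℝ ℝ ℝ).prod
      (c • ContinuousLinearMap.fst ℝ ℝ ℝ + d • ContinuousLinearMap.snd ℝ ℝ ℝ)

lemma integral_linearCombination_stdGaussian (hX : HasLaw X (gaussianReal 0 1) P)
    (hY : HasLaw Y (gaussianReal 0 1) P) (a b : ℝ) : ∫ ω, a * X ω + b * Y ω ∂P = 0 := by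
  rw [integral_add (hX.hasGaussianLaw.integrable.const_mul a)
    (hY.hasGaussianLaw.integrable.const_mul b), integral_const_mul, integral_const_mul,
    hX.integral_eq, hY.integral_eq, integral_id_gaussianReal, mul_zero, mul_zero, add_zero]

lemma covariance_linearCombination_stdGaussian (hX : HasLaw X (gaussianReal 0 1) P)
    (hY : HasLaw Y (gaussianReal 0 1) P) (hindep : X ⟂ᵢ[P] Y) (a b c d : ℝ) :
    cov[fun ω ↦ a * X ω + b * Y ω, fun ω ↦ c * X ω + d * Y ω; P] = a * c + b * d := by
  have := hX.isProbabilityMeasure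
  rw [covariance_linearCombination_of_indepFun hX.hasGaussianLaw.memLp_two
    hY.hasGaussianLaw.memLp_two hindep, hX.variance_eq, hY.variance_eq, variance_id_gaussianReal,
    NNReal.coe_one, mul_one, mul_one]

lemma variance_linearCombination_stdGaussian (hX : HasLaw X (gaussianReal 0 1) P)
    (hY : HasLaw Y (gaussianReal 0 1) P) (hindep : X ⟂ᵢ[P] Y) (a b : ℝ) :
    Var[fun ω ↦ a * X ω + b * Y ω; P] = a ^ 2 + b ^ 2 := by
  have hmeas : AEMeasurable (fun ω ↦ a * X ω + b * Y ω) P :=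
    (hX.aemeasurable.const_mul a).add (hY.aemeasurable.const_mul b)
  rw [← covariance_self hmeas, covariance_linearCombination_stdGaussian hX hY hindep, sq, sq]

lemma charFunDual_map_gaussianPair (hXY : HasGaussianLaw (fun ω ↦ (X ω, Y ω)) P)
    (L : StrongDual ℝ (ℝ × ℝ)) :
    charFunDual (P.map fun ω ↦ (X ω, Y ω)) L =
      Complex.exp ((L (1, 0) * P[X] + L (0, 1) * P[Y] : ℝ) * Complex.I -
        (L (1, 0) ^ 2 * Var[X; P] + 2 * (L (1, 0) * L (0, 1) * cov[X, Y; P]) +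
          L (0, 1) ^ 2 * Var[Y; P] : ℝ) / 2) := by
  have := hXY.isProbabilityMeasure
  have hX : MemLp (fun ω ↦ L (1, 0) * X ω) 2 P := hXY.fst.memLp_two.const_mul _
  have hY : MemLp (fun ω ↦ L (0, 1) * Y ω) 2 P := hXY.snd.memLp_two.const_mul _
  have hL (ω : Ω) : L (X ω, Y ω) = L (1, 0) * X ω + L (0, 1) * Y ω := by
    have hbasis : (X ω, Y ω) = X ω • ((1, 0) : ℝ × ℝ) + Y ω • ((0, 1) : ℝ × ℝ) := by simp
    rw [hbasis, map_add, map_smul, map_smul, smul_eq_mul, smul_eq_mul, mul_comm, mul_comm (Y ω)]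
  rw [hXY.charFunDual_map_eq_fun]
  simp only [hL]
  rw [integral_add (hX.integrable one_le_two) (hY.integrable one_le_two), integral_const_mul,
    integral_const_mul, variance_fun_add hX hY, variance_const_mul, variance_const_mul,
    covariance_const_mul_left, covariance_const_mul_right, mul_assoc (L (1, 0))]

lemma identDistrib_of_gaussianPair (hXY : HasGaussianLaw (fun ω ↦ (X ω, Y ω)) P)
    (hUV : HasGaussianLaw (fun ω ↦ (U ω, V ω)) Q) (hmean₁ : P[X] = Q[U]) (hmean₂ : P[Y] = Q[V])
    (hvar₁ : Var[X; P] = Var[U; Q]) (hvar₂ : Var[Y; P] = Var[V; Q])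
    (hcov : cov[X, Y; P] = cov[U, V; Q]) :
    IdentDistrib (fun ω ↦ (X ω, Y ω)) (fun ω ↦ (U ω, V ω)) P Q where
  aemeasurable_fst := hXY.aemeasurable
  aemeasurable_snd := hUV.aemeasurable
  map_eq := by
    have := hXY.isGaussian_map
    have := hUV.isGaussian_map
    refine Measure.ext_of_charFunDual (funext fun L ↦ ?_)
    rw [charFunDual_map_gaussianPair hXY, charFunDual_map_gaussianPair hUV, hmean₁, hmean₂, hvar₁,
      hvar₂, hcov]

lemma identDistrib_cholesky_stdGaussian {a c d : ℝ}
    (hXY : HasGaussianLaw (fun ω ↦ (X ω, Y ω)) P) (hX : P[X] = 0) (hY : P[Y] = 0)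
    (hvarX : Var[X; P] = a ^ 2) (hcov : cov[X, Y; P] = a * c) (hvarY : Var[Y; P] = c ^ 2 + d ^ 2) :
    IdentDistrib (fun ω ↦ (X ω, Y ω)) (fun p : ℝ × ℝ ↦ (a * p.1, c * p.1 + d * p.2)) P
      ((gaussianReal 0 1).prod (gaussianReal 0 1)) := by
  set γ := (gaussianReal 0 1).prod (gaussianReal 0 1)
  have hfst : HasLaw Prod.fst (gaussianReal 0 1) γ := ⟨by fun_prop, measurePreserving_fst.map_eq⟩
  have hsnd : HasLaw Prod.snd (gaussianReal 0 1) γ := ⟨by fun_prop, measurePreserving_snd.map_eq⟩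
  have hindep : Prod.fst ⟂ᵢ[γ] Prod.snd := indepFun_prod measurable_id measurable_id
  have hgaussian := hasGaussianLaw_linearCombination
    (hindep.hasGaussianLaw hfst.hasGaussianLaw hsnd.hasGaussianLaw) a 0 c d
  have hmean := integral_linearCombination_stdGaussian hfst hsnd
  have hvar := variance_linearCombination_stdGaussian hfst hsnd hindep
  have hcombCov := covariance_linearCombination_stdGaussian hfst hsnd hindep a 0 c d
  have hlaw := identDistrib_of_gaussianPair hXY hgaussian (hX.trans (hmean a 0).symm)
    (hY.trans (hmean c d).symm) (by rw [hvarX, hvar]; ring) (by rw [hvarY, hvar])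
    (by rw [hcov, hcombCov]; ring)
  simpa only [zero_mul, add_zero] using hlaw

/-- **Sheppard's orthant formula**. -/
theorem measureReal_pos_pos_of_gaussianPair (hXY : HasGaussianLaw (fun ω ↦ (X ω, Y ω)) P)
    (hX : P[X] = 0) (hY : P[Y] = 0) (hvarX : Var[X; P] ≠ 0) (hvarY : Var[Y; P] ≠ 0) :
    P.real {ω | 0 < X ω ∧ 0 < Y ω} =
      1 / 2 - 1 / (2 * π) * arccos (cov[X, Y; P] / √(Var[X; P] * Var[Y; P])) := by
  have := hXY.isProbabilityMeasure
  set ρ := cov[X, Y; P] / √(Var[X; P] * Var[Y; P]) with hρ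
  have hσ : 0 < √Var[X; P] := sqrt_pos.2 (hvarX.symm.lt_of_le (variance_nonneg _ _))
  have hτ : 0 < √Var[Y; P] := sqrt_pos.2 (hvarY.symm.lt_of_le (variance_nonneg _ _))
  have hρ_abs : |ρ| ≤ 1 := by
    rw [hρ, abs_div, abs_of_nonneg (sqrt_nonneg _)]
    exact div_le_one_of_le₀ (abs_covariance_le_sqrt_variance_mul_variance hXY.fst.memLp_two
      hXY.snd.memLp_two) (sqrt_nonneg _)
  have hcos : cos (arccos ρ) = ρ := cos_arccos (abs_le.1 hρ_abs).1 (abs_le.1 hρ_abs).2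
  have hlaw := identDistrib_cholesky_stdGaussian hXY hX hY
    (a := √Var[X; P]) (c := √Var[Y; P] * cos (arccos ρ)) (d := √Var[Y; P] * sin (arccos ρ))
    (sq_sqrt (variance_nonneg _ _)).symm
    (by rw [hcos, hρ, sqrt_mul (variance_nonneg _ _)]; field_simp)
    (by rw [mul_pow, mul_pow, ← mul_add, cos_sq_add_sin_sq, mul_one, sq_sqrt (variance_nonneg _ _)])
  have hquadrant : MeasurableSet {p : ℝ × ℝ | 0 < p.1 ∧ 0 < p.2} := by measurability
  have hmeasure := congrArg ENNReal.toReal (hlaw.measure_mem_eq hquadrant)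
  simp only [Set.preimage_ofPred_eq, mul_assoc, ← mul_add, mul_pos_iff_of_pos_left hσ,
    mul_pos_iff_of_pos_left hτ] at hmeasure
  exact hmeasure.trans (measureReal_gaussianReal_prod_halfPlanes ⟨arccos_nonneg _, arccos_le_pi _⟩)

end GaussianPairs

section Differences

variable {Ω Ω' : Type*} [MeasurableSpace Ω] [MeasurableSpace Ω'] {P : Measure Ω} {Q : Measure Ω'}
  {X Y : Ω → ℝ} {U V : Ω' → ℝ}

lemma hasGaussianLaw_sub_prod (hXY : HasGaussianLaw (fun ω ↦ (X ω, Y ω)) P)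
    (hUV : HasGaussianLaw (fun ω ↦ (U ω, V ω)) Q) :
    HasGaussianLaw (fun q : Ω × Ω' ↦ (X q.1 - U q.2, Y q.1 - V q.2)) (P.prod Q) := by
  have := hXY.isProbabilityMeasure
  have := hUV.isProbabilityMeasure
  have := hXY.isGaussian_map
  have := hUV.isGaussian_map
  have hfst : HasLaw (fun q : Ω × Ω' ↦ (X q.1, Y q.1)) (P.map fun ω ↦ (X ω, Y ω)) (P.prod Q) :=
    (HasLaw.mk hXY.aemeasurable rfl).comp measurePreserving_fst.hasLaw
  have hsnd : HasLaw (fun q : Ω × Ω' ↦ (U q.2, V q.2)) (Q.map fun ω ↦ (U ω, V ω)) (P.prod Q) :=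
    (HasLaw.mk hUV.aemeasurable rfl).comp measurePreserving_snd.hasLaw
  exact iIndepFun.hasGaussianLaw_sub hfst.hasGaussianLaw hsnd.hasGaussianLaw
    (indepFun_prod₀ hXY.aemeasurable hUV.aemeasurable)

lemma integral_sub_prod [IsProbabilityMeasure P] [IsProbabilityMeasure Q] (hX : Integrable X P)
    (hU : Integrable U Q) : ∫ q, X q.1 - U q.2 ∂P.prod Q = P[X] - Q[U] := by
  rw [integral_sub (hX.comp_fst Q) (hU.comp_snd P), integral_fun_fst, integral_fun_snd]
  simp

lemma covariance_sub_prod [IsProbabilityMeasure P] [IsProbabilityMeasure Q] (hX : MemLp X 2 P)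
    (hY : MemLp Y 2 P) (hU : MemLp U 2 Q) (hV : MemLp V 2 Q) :
    cov[fun q ↦ X q.1 - U q.2, fun q ↦ Y q.1 - V q.2; P.prod Q] =
      cov[X, Y; P] + cov[U, V; Q] := by
  have hfst : cov[fun q ↦ X q.1, fun q ↦ Y q.1; P.prod Q] = cov[X, Y; P] := by
    have hmap : (P.prod Q).map Prod.fst = P := measurePreserving_fst.map_eq
    rw [← covariance_map_fun (by rw [hmap]; exact hX.1) (by rw [hmap]; exact hY.1)
      measurable_fst.aemeasurable, hmap]
  have hsnd : cov[fun q ↦ U q.2, fun q ↦ V q.2; P.prod Q] = cov[U, V; Q] := by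
    have hmap : (P.prod Q).map Prod.snd = Q := measurePreserving_snd.map_eq
    rw [← covariance_map_fun (by rw [hmap]; exact hU.1) (by rw [hmap]; exact hV.1)
      measurable_snd.aemeasurable, hmap]
  rw [covariance_fun_sub_fun_sub (hX.comp_fst Q) (hU.comp_snd P) (hY.comp_fst Q) (hV.comp_snd P),
    hfst, hsnd, covariance_fst_snd_prod hX hV,
    covariance_comm (fun q : Ω × Ω' ↦ U q.2), covariance_fst_snd_prod hY hU]
  ring

lemma variance_sub_prod [IsProbabilityMeasure P] [IsProbabilityMeasure Q] (hX : MemLp X 2 P)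
    (hU : MemLp U 2 Q) :
    Var[fun q ↦ X q.1 - U q.2; P.prod Q] = Var[X; P] + Var[U; Q] := by
  have hsub : MemLp (fun q : Ω × Ω' ↦ X q.1 - U q.2) 2 (P.prod Q) :=
    (hX.comp_fst Q).sub (hU.comp_snd P)
  rw [← covariance_self hsub.aemeasurable, covariance_sub_prod hX hX hU hU,
    covariance_self hX.aemeasurable, covariance_self hU.aemeasurable]

end Differences

section GaussianCDF

lemma cdf_eq_measureReal_Iio (μ : Measure ℝ) [IsProbabilityMeasure μ] [NullSingletonClass μ]
    (x : ℝ) : cdf μ x = μ.real (Set.Iio x) := by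
  rw [cdf_eq_real, measureReal_congr Iio_ae_eq_Iic]

lemma cdf_gaussianReal_eq_integral (x : ℝ) :
    cdf (gaussianReal 0 1) x = (√(2 * π))⁻¹ * ∫ u in Set.Iic x, exp (-u ^ 2 / 2) := by
  rw [cdf_eq_real, measureReal_def, gaussianReal_apply_eq_integral _ one_ne_zero,
    ENNReal.toReal_ofReal (integral_nonneg fun _ ↦ gaussianPDFReal_nonneg _ _ _)]
  simp [gaussianPDFReal, integral_const_mul]

variable {Ω : Type*} [MeasurableSpace Ω] {P : Measure Ω} {X Y : Ω → ℝ}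

lemma integral_measureReal_Iio_mul_measureReal_Iio [IsFiniteMeasure P] {μ ν : Measure ℝ}
    [IsFiniteMeasure μ] [IsFiniteMeasure ν] (hX : AEMeasurable X P) (hY : AEMeasurable Y P) :
    ∫ ω, μ.real (Set.Iio (X ω)) * ν.real (Set.Iio (Y ω)) ∂P =
      (P.prod (μ.prod ν)).real {q | 0 < X q.1 - q.2.1 ∧ 0 < Y q.1 - q.2.2} := by
  set S := {q : Ω × ℝ × ℝ | 0 < X q.1 - q.2.1 ∧ 0 < Y q.1 - q.2.2}
  have hS : NullMeasurableSet S (P.prod (μ.prod ν)) := by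
    have h₁ : AEMeasurable (fun q : Ω × ℝ × ℝ ↦ X q.1 - q.2.1) (P.prod (μ.prod ν)) :=
      hX.comp_fst.sub (by fun_prop)
    have h₂ : AEMeasurable (fun q : Ω × ℝ × ℝ ↦ Y q.1 - q.2.2) (P.prod (μ.prod ν)) :=
      hY.comp_fst.sub (by fun_prop)
    exact (nullMeasurableSet_lt aemeasurable_const h₁).inter
      (nullMeasurableSet_lt aemeasurable_const h₂)
  have hsection (ω : Ω) : Prod.mk ω ⁻¹' S = Set.Iio (X ω) ×ˢ Set.Iio (Y ω) := by
    ext; simp [S]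
  have hinner (ω : Ω) : ∫ p, S.indicator (fun _ ↦ (1 : ℝ)) (ω, p) ∂μ.prod ν =
      μ.real (Set.Iio (X ω)) * ν.real (Set.Iio (Y ω)) := by
    change ∫ p, (Prod.mk ω ⁻¹' S).indicator (fun _ ↦ (1 : ℝ)) p ∂μ.prod ν = _
    rw [hsection, integral_indicator (measurableSet_Iio.prod measurableSet_Iio), setIntegral_const,
      smul_eq_mul, mul_one, measureReal_prod_prod]
  calc ∫ ω, μ.real (Set.Iio (X ω)) * ν.real (Set.Iio (Y ω)) ∂P
    _ = ∫ q, S.indicator (fun _ ↦ (1 : ℝ)) q ∂P.prod (μ.prod ν) := by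
      rw [integral_prod _ ((integrable_const 1).indicator₀ hS)]
      simp only [hinner]
    _ = (P.prod (μ.prod ν)).real S := by
      rw [integral_indicator₀ hS, setIntegral_const, smul_eq_mul, mul_one]

theorem stmt_17_general (hXY : HasGaussianLaw (fun ω ↦ (X ω, Y ω)) P) (hX : P[X] = 0)
    (hY : P[Y] = 0) :
    ∫ ω, cdf (gaussianReal 0 1) (X ω) * cdf (gaussianReal 0 1) (Y ω) ∂P =
      1 / 2 - 1 / (2 * π) * arccos (cov[X, Y; P] / √((1 + Var[X; P]) * (1 + Var[Y; P]))) := by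
  have := hXY.isProbabilityMeasure
  have := nullSingletonClass_gaussianReal (μ := 0) one_ne_zero
  set γ := gaussianReal 0 1
  have hfst : HasLaw Prod.fst γ (γ.prod γ) := measurePreserving_fst.hasLaw
  have hsnd : HasLaw Prod.snd γ (γ.prod γ) := measurePreserving_snd.hasLaw
  have hU : MemLp Prod.fst 2 (γ.prod γ) := hfst.hasGaussianLaw.memLp_two
  have hV : MemLp Prod.snd 2 (γ.prod γ) := hsnd.hasGaussianLaw.memLp_two
  have hUV : cov[Prod.fst, Prod.snd; γ.prod γ] = 0 :=
    (indepFun_prod measurable_id measurable_id).covariance_eq_zero hU hV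
  have hX₂ : MemLp X 2 P := hXY.fst.memLp_two
  have hY₂ : MemLp Y 2 P := hXY.snd.memLp_two
  have hlaw := hasGaussianLaw_sub_prod hXY (U := Prod.fst) (V := Prod.snd)
    (IsGaussian.hasGaussianLaw_id (μ := γ.prod γ))
  have hmeanX : ∫ q, X q.1 - q.2.1 ∂P.prod (γ.prod γ) = 0 := by
    rw [integral_sub_prod (hX₂.integrable one_le_two) (hU.integrable one_le_two), hX,
      hfst.integral_eq, integral_id_gaussianReal, sub_zero]
  have hmeanY : ∫ q, Y q.1 - q.2.2 ∂P.prod (γ.prod γ) = 0 := by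
    rw [integral_sub_prod (hY₂.integrable one_le_two) (hV.integrable one_le_two), hY,
      hsnd.integral_eq, integral_id_gaussianReal, sub_zero]
  have hvarX : Var[fun q ↦ X q.1 - q.2.1; P.prod (γ.prod γ)] = 1 + Var[X; P] := by
    rw [variance_sub_prod hX₂ hU, hfst.variance_eq, variance_id_gaussianReal, add_comm]
    simp
  have hvarY : Var[fun q ↦ Y q.1 - q.2.2; P.prod (γ.prod γ)] = 1 + Var[Y; P] := by
    rw [variance_sub_prod hY₂ hV, hsnd.variance_eq, variance_id_gaussianReal, add_comm]
    simp
  have hcov : cov[fun q ↦ X q.1 - q.2.1, fun q ↦ Y q.1 - q.2.2; P.prod (γ.prod γ)] =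
      cov[X, Y; P] := by
    rw [covariance_sub_prod hX₂ hY₂ hU hV, hUV, add_zero]
  simp only [cdf_eq_measureReal_Iio]
  rw [integral_measureReal_Iio_mul_measureReal_Iio hXY.fst.aemeasurable hXY.snd.aemeasurable,
    measureReal_pos_pos_of_gaussianPair hlaw hmeanX hmeanY, hcov, hvarX, hvarY]
  · exact hvarX ▸ (add_pos_of_pos_of_nonneg one_pos (variance_nonneg _ _)).ne'
  · exact hvarY ▸ (add_pos_of_pos_of_nonneg one_pos (variance_nonneg _ _)).ne'

end GaussianCDF

theorem stmt_17 {Ω : Type*} [MeasureSpace Ω]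
    [IsProbabilityMeasure (volume : Measure Ω)]
    (r : ℝ) (hr : |r| ≤ 1) (X Z : Ω → ℝ)
    (hX : Measure.map X (volume : Measure Ω) = gaussianReal 0 1)
    (hZ : Measure.map Z (volume : Measure Ω) = gaussianReal 0 1)
    (hindep : IndepFun X Z)
    (Y : Ω → ℝ) (hY : Y = fun ω => r * X ω + Real.sqrt (1 - r ^ 2) * Z ω)
    (Φ : ℝ → ℝ)
    (hΦ : ∀ x, Φ x = (Real.sqrt (2 * π))⁻¹ * ∫ u in Set.Iic x, Real.exp (-u ^ 2 / 2)) :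
    ∫ ω, Φ (X ω) * Φ (Y ω) = 1 / 2 - (1 / (2 * π)) * Real.arccos (r / 2) := by
  obtain rfl : Φ = cdf (gaussianReal 0 1) :=
    funext fun x ↦ (hΦ x).trans (cdf_gaussianReal_eq_integral x).symm
  subst hY
  have hXlaw : HasLaw X (gaussianReal 0 1) :=
    ⟨.of_map_ne_zero (hX ▸ IsProbabilityMeasure.ne_zero _), hX⟩
  have hZlaw : HasLaw Z (gaussianReal 0 1) :=
    ⟨.of_map_ne_zero (hZ ▸ IsProbabilityMeasure.ne_zero _), hZ⟩
  have hr₂ : 0 ≤ 1 - r ^ 2 := sub_nonneg.2 ((sq_le_one_iff_abs_le_one r).2 hr)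
  have hXY := hasGaussianLaw_linearCombination
    (hindep.hasGaussianLaw hXlaw.hasGaussianLaw hZlaw.hasGaussianLaw) 1 0 r √(1 - r ^ 2)
  have hmean := integral_linearCombination_stdGaussian hXlaw hZlaw
  have hvar := variance_linearCombination_stdGaussian hXlaw hZlaw hindep
  have hcov := covariance_linearCombination_stdGaussian hXlaw hZlaw hindep 1 0 r √(1 - r ^ 2)
  have hsd : √((1 + (1 ^ 2 + 0 ^ 2)) * (1 + (r ^ 2 + √(1 - r ^ 2) ^ 2))) = 2 := by
    rw [sq_sqrt hr₂, sqrt_eq_iff_mul_self_eq_of_pos two_pos]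
    ring
  have hformula := stmt_17_general hXY (hmean 1 0) (hmean r _)
  rw [hcov, hvar, hvar, hsd] at hformula
  simpa only [one_mul, zero_mul, add_zero] using hformula
end
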